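/- arXiv:1609.09364 — 3 statements merged into one kernel-verified Lean document; each statement's English description precedes it below -/
import Mathlib

section
/- Let Γ be a nonempty finite set and N a quadratic normalisation on Γ satisfying Condition (home). Then the monoid generated by the Mealy automaton M_{Γ,N} is a quotient of the semigroup presented by (Γ,N); precisely, for all nonempty words u, v over Γ, if (u, v) lies in the monoid congruence on Γ* generated by the pairs (ab, N̄(ab)) for a, b ∈ Γ, then the production functions σ_u and σ_v are equal as functions Γ* → Γ*. In particular, for all a, b, c, d ∈ Γ with N̄(ab) = N̄(cd), one has σ_b ∘ σ_a = σ_d ∘ σ_c. -/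
namespace Stmt1

variable {α : Type}

/-- Apply the two-letter normalisation `nf` at (1-indexed) position `i` of a word. -/
def applyAtL (nf : α → α → List α) : ℕ → List α → List α
  | 1, x :: y :: s => nf x y ++ s
  | n + 2, x :: s => x :: applyAtL nf (n + 1) s
  | _, w => w

/-- Apply the two-letter normalisation along a finite sequence of positions
(the first position in the list is applied first). -/
def seqApplyL (nf : α → α → List α) (l : List ℕ) (w : List α) : List α :=
  l.foldl (fun w i => applyAtL nf i w) w

/-- Production function of the Mealy automaton `M_{Γ,N}` with state `x`. -/
def prodFn (tau sig : α → α → α) : α → List α → List α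
  | _, [] => []
  | x, i :: s => sig x i :: prodFn tau sig (tau i x) s

/-- Production function of a word `u = x₁⋯xₙ`: `σ_u = σ_{xₙ} ∘ ⋯ ∘ σ_{x₁}`. -/
def prodWord (tau sig : α → α → α) : List α → List α → List α
  | [], s => s
  | x :: u, s => prodWord tau sig u (prodFn tau sig x s)

/-- The defining relations of the semigroup presented by `(Γ,N)`:
the pairs `(ab, N̄(ab))` for `a, b ∈ Γ`. -/
def quadRel (N : List α → List α) : FreeMonoid α → FreeMonoid α → Prop :=
  fun x y => ∃ a b : α,
    FreeMonoid.toList x = [a, b] ∧ FreeMonoid.toList y = N [a, b]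

/-! Write `N̄` for the two-letter normalisation. Reading a letter `i` moves the pair of states
`(a, b)` to `(p, q)` and outputs `k`, where `p`, `q` and `k` are the three letters of
`N̄₁₂(iab)`; hence `N̄₁₂₁(iab)` is `N̄(pq)` followed by `k`. Condition (home) says that
`N̄₁₂₁(iab)` is unchanged when `ab` is replaced by `N̄(ab)`. So the pairs `ab` and `N̄(ab)`,
and likewise any two pairs with the same image under `N̄`, output the same letter and move to
pairs with the same image under `N̄`, and the argument repeats along the input word. -/

section TwoLetter

variable {nf : α → α → List α} {tau sig : α → α → α}

/-- The part of Condition (home) which only involves the two-letter normalisation: the identity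
`N̄₁₂₁ = N̄₂₁₂₁` on words of length three. -/
def HomeCondition (nf : α → α → List α) : Prop :=
  ∀ x y z : α, seqApplyL nf [1, 2, 1] [x, y, z] = seqApplyL nf [2, 1, 2, 1] [x, y, z]

theorem HomeCondition.seqApplyL_cons (home : HomeCondition nf) (x y z : α) :
    seqApplyL nf [1, 2, 1] [x, y, z] = seqApplyL nf [1, 2, 1] (x :: nf y z) := by
  simpa only [seqApplyL, List.foldl_cons, applyAtL, List.append_nil] using home x y z

theorem seqApplyL_one_two_one (hnf : ∀ x y, nf x y = [tau x y, sig y x]) (x y z : α) :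
    seqApplyL nf [1, 2, 1] [x, y, z] =
      nf (tau x y) (tau (sig y x) z) ++ [sig z (sig y x)] := by
  simp only [seqApplyL, List.foldl_cons, List.foldl_nil, applyAtL, hnf, List.cons_append,
    List.nil_append]

theorem prodFn_prodFn_eq_of_seqApplyL_eq (hnf : ∀ x y, nf x y = [tau x y, sig y x])
    (home : HomeCondition nf) {a b c d : α}
    (h : ∀ i, seqApplyL nf [1, 2, 1] [i, a, b] = seqApplyL nf [1, 2, 1] [i, c, d])
    (s : List α) :
    prodFn tau sig b (prodFn tau sig a s) = prodFn tau sig d (prodFn tau sig c s) := by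
  induction s generalizing a b c d with
  | nil => rfl
  | cons i s ih =>
    have key := h i
    rw [seqApplyL_one_two_one hnf, seqApplyL_one_two_one hnf] at key
    obtain ⟨states, output⟩ := List.append_inj' key rfl
    have tail : prodFn tau sig (tau (sig a i) b) (prodFn tau sig (tau i a) s) =
        prodFn tau sig (tau (sig c i) d) (prodFn tau sig (tau i c) s) :=
      ih fun j => by rw [home.seqApplyL_cons, states, ← home.seqApplyL_cons]
    simp only [prodFn, List.singleton_inj.mp output, tail]

theorem prodFn_prodFn_eq_of_nf_eq (hnf : ∀ x y, nf x y = [tau x y, sig y x])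
    (home : HomeCondition nf) {a b c d : α} (h : nf a b = nf c d) (s : List α) :
    prodFn tau sig b (prodFn tau sig a s) = prodFn tau sig d (prodFn tau sig c s) :=
  prodFn_prodFn_eq_of_seqApplyL_eq hnf home
    (fun i => by rw [home.seqApplyL_cons, h, ← home.seqApplyL_cons]) s

theorem prodFn_prodFn_eq_prodFn_sig_prodFn_tau (hnf : ∀ x y, nf x y = [tau x y, sig y x])
    (home : HomeCondition nf) (a b : α) (s : List α) :
    prodFn tau sig b (prodFn tau sig a s) =
      prodFn tau sig (sig b a) (prodFn tau sig (tau a b) s) :=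
  prodFn_prodFn_eq_of_seqApplyL_eq hnf home
    (fun i => by rw [home.seqApplyL_cons, hnf a b]) s

end TwoLetter

section ProductionHom

open MulOpposite

/-- The monoid homomorphism sending a word `u` to its production function `σ_u`. It takes values in
the opposite of `Function.End (List α)` because `σ_{uv} = σ_v ∘ σ_u`; its image is the monoid
generated by the Mealy automaton. -/
def prodHom (tau sig : α → α → α) : FreeMonoid α →* (Function.End (List α))ᵐᵒᵖ :=
  FreeMonoid.lift fun x => op (prodFn tau sig x)

theorem prodHom_ofList (tau sig : α → α → α) (u : List α) :
    prodHom tau sig (FreeMonoid.ofList u) = op (prodWord tau sig u) := by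
  induction u with
  | nil => rfl
  | cons x u ih =>
    rw [FreeMonoid.ofList_cons, map_mul, ih, prodHom, FreeMonoid.lift_eval_of]
    rfl

theorem conGen_quadRel_le_ker_prodHom {N : List α → List α} {tau sig : α → α → α}
    (hNbar : ∀ x y : α, N [x, y] = [tau x y, sig y x])
    (home : HomeCondition fun x y => N [x, y]) :
    conGen (quadRel N) ≤ Con.ker (prodHom tau sig) := by
  refine Con.conGen_le.mpr ?_
  rintro x y ⟨a, b, hx, hy⟩
  obtain rfl : x = FreeMonoid.ofList [a, b] := hx
  obtain rfl : y = FreeMonoid.ofList [tau a b, sig b a] := hy.trans (hNbar a b)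
  rw [Con.ker_rel, prodHom_ofList, prodHom_ofList]
  exact congrArg op (funext (prodFn_prodFn_eq_prodFn_sig_prodFn_tau hNbar home a b))

end ProductionHom

theorem mealy_monoid_quotient_of_presented_general
    {Γ : Type} (N : List Γ → List Γ) (tau sig : Γ → Γ → Γ)
    (hNbar : ∀ x y : Γ, N [x, y] = [tau x y, sig y x])
    (home : HomeCondition fun x y => N [x, y]) :
    (∀ u v : List Γ,
        conGen (quadRel N) (FreeMonoid.ofList u) (FreeMonoid.ofList v) →
        prodWord tau sig u = prodWord tau sig v) ∧
    (∀ a b c d : Γ, N [a, b] = N [c, d] →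
        ∀ s : List Γ, prodFn tau sig b (prodFn tau sig a s) =
          prodFn tau sig d (prodFn tau sig c s)) := by
  refine ⟨fun u v huv => ?_, fun a b c d h => prodFn_prodFn_eq_of_nf_eq hNbar home h⟩
  have hker := conGen_quadRel_le_ker_prodHom hNbar home huv
  rw [Con.ker_rel, prodHom_ofList, prodHom_ofList] at hker
  exact MulOpposite.op_injective hker

/-- Proposition `prop-home`, direction `⇐`: for a quadratic
normalisation `(Γ,N)` satisfying Condition (home), the monoid generated by the Mealy
automaton `M_{Γ,N}` is a quotient of the semigroup presented by `(Γ,N)`; in particular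
`N̄(ab) = N̄(cd)` implies `σ_b ∘ σ_a = σ_d ∘ σ_c`. -/
theorem mealy_monoid_quotient_of_presented
    {Γ : Type} [Fintype Γ] [Nonempty Γ]
    (N : List Γ → List Γ) (tau sig : Γ → Γ → Γ)
    (hlen : ∀ w : List Γ, (N w).length = w.length)
    (hone : ∀ x : Γ, N [x] = [x])
    (habs : ∀ u w v : List Γ, w ≠ [] → N (u ++ N w ++ v) = N (u ++ w ++ v))
    (hquad₁ : ∀ w : List Γ, w ≠ [] →
      (N w = w ↔ ∀ p s : List Γ, ∀ x y : Γ, w = p ++ [x, y] ++ s → N [x, y] = [x, y]))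
    (hquad₂ : ∀ w : List Γ, w ≠ [] →
      ∃ l : List ℕ, N w = seqApplyL (fun x y => N [x, y]) l w)
    (hNbar : ∀ x y : Γ, N [x, y] = [tau x y, sig y x])
    (hhome : ∀ x y z : Γ,
      N [x, y, z] = seqApplyL (fun a b => N [a, b]) [1, 2, 1] [x, y, z] ∧
      N [x, y, z] = seqApplyL (fun a b => N [a, b]) [2, 1, 2, 1] [x, y, z]) :
    (∀ u v : List Γ, u ≠ [] → v ≠ [] →
        conGen (quadRel N) (FreeMonoid.ofList u) (FreeMonoid.ofList v) →
        prodWord tau sig u = prodWord tau sig v) ∧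
    (∀ a b c d : Γ, N [a, b] = N [c, d] →
        ∀ s : List Γ, prodFn tau sig b (prodFn tau sig a s) =
          prodFn tau sig d (prodFn tau sig c s)) := by
  have general := mealy_monoid_quotient_of_presented_general N tau sig hNbar
    fun x y z => (hhome x y z).1.symm.trans (hhome x y z).2
  exact ⟨fun u v _ _ => general.1 u v, general.2⟩

end Stmt1
end

section
/- Let Γ be a nonempty finite set and N a quadratic normalisation on Γ satisfying Condition (home). Define the one-step rewriting relation → on words over Γ by: u → v iff there exist words p, s and letters a, b ∈ Γ with u = p ++ [a, b] ++ s, N̄(ab) ≠ ab, and v = p ++ N̄(ab) ++ s. Then the rewriting system is convergent; in particular it is terminating: there is no infinite sequence w₀ → w₁ → w₂ → ⋯ (the converse of → is well-founded). -/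
namespace Stmt7

variable {α : Type}

/-- Apply the two-letter normalisation `nf` at (1-indexed) position `i` of a word. -/
def applyAtL (nf : α → α → List α) : ℕ → List α → List α
  | 1, x :: y :: s => nf x y ++ s
  | n + 2, x :: s => x :: applyAtL nf (n + 1) s
  | _, w => w

/-- Apply the two-letter normalisation along a finite sequence of positions
(the first position in the list is applied first). -/
def seqApplyL (nf : α → α → List α) (l : List ℕ) (w : List α) : List α :=
  l.foldl (fun w i => applyAtL nf i w) w

/-- The one-step rewriting relation associated with a quadratic normalisation:
replace some non-normal length-two factor `ab` by `N̄(ab)`. -/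
def Rw (N : List α → List α) (u v : List α) : Prop :=
  ∃ (p s : List α) (x y : α),
    u = p ++ [x, y] ++ s ∧ N [x, y] ≠ [x, y] ∧ v = p ++ N [x, y] ++ s

/-! Writing `N s = q ++ [z]`, say that a letter `x` keeps the last letter `z` of `N s` if
`N (x :: s) = N (x :: q) ++ [z]`; the *defect* of a word counts its letters that do not keep the
last letter of the normalised suffix after them. The rule `N = N̄₁₂₁` on three-letter words lets one
normalise a word letter by letter, each new letter being absorbed in one right-to-left sweep.
Sweeping shows that `x` keeps the last letter if it forms a normal pair with the first letter of
`s`, and hence that rewriting a non-normal pair never increases the defect of a word, and strictly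
decreases it when the pair is a suffix. A step at the letters `k` and `k + 1` therefore does not
increase the defect of any prefix except the one of length `k`, and decreases that of the prefix of
length `k + 1`; since the defect of a word is at most its length, a factorially weighted sum over
prefixes decreases. Each step preserves `N`, and the irreducible words are the normal ones, so
termination makes every word reduce to its normal form, whence confluence.
-/

/-- A normalisation: a length-preserving map on words, fixing letters, whose value does not change
when a nonempty factor of the argument is normalised first. Encoded as a map on all words: length
preservation determines its value at the empty one. -/
structure IsNormalisation (N : List α → List α) : Prop where
  length_eq : ∀ w, (N w).length = w.length
  apply_letter : ∀ x, N [x] = [x]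
  absorb_of_ne_nil : ∀ u w v, w ≠ [] → N (u ++ N w ++ v) = N (u ++ w ++ v)

/-- A normalisation whose normal words are those with normal length-two factors, which is clause (a)
of quadraticity. -/
structure IsLocalNormalisation (N : List α → List α) : Prop extends IsNormalisation N where
  normal_iff_of_ne_nil : ∀ w, w ≠ [] →
    (N w = w ↔ ∀ p s x y, w = p ++ [x, y] ++ s → N [x, y] = [x, y])

/-- A local normalisation of left class 3: words of length three are normalised by `N̄₁₂₁`. -/
structure IsLeftClassThree (N : List α → List α) : Prop extends IsLocalNormalisation N where
  apply_triple : ∀ x y z, N [x, y, z] = seqApplyL (fun a b => N [a, b]) [1, 2, 1] [x, y, z]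

/-- Prepending `x` to `s` leaves the last letter of `N s` in place: writing `N s = q ++ [z]`, the
word `x :: s` is normalised by normalising `x :: q` only. -/
def KeepsLast (N : List α → List α) (x : α) (s : List α) : Prop :=
  ∀ q z, N s = q ++ [z] → N (x :: s) = N (x :: q) ++ [z]

open Classical in
/-- The number of letters of a word which, when prepended to the suffix following them, alter the
last letter of its normal form in the sense of `KeepsLast`. -/
noncomputable def defect (N : List α → List α) : List α → ℕ
  | [] => 0
  | x :: s => (if KeepsLast N x s then 0 else 1) + defect N s

/-- The termination measure: the defects of all prefixes, weighted so that a decrease by one on a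
prefix of length `k + 1` outweighs any increase on the prefix of length `k`. -/
noncomputable def rank (N : List α → List α) (w : List α) : ℕ :=
  ∑ k ∈ Finset.range w.length, (k + 1).factorial * defect N (w.take (k + 1))

section Rank

variable (N : List α → List α)

theorem defect_le_length (w : List α) : defect N w ≤ w.length := by
  induction w with
  | nil => simp [defect]
  | cons x s ih =>
    rw [defect, List.length_cons]
    split_ifs <;> omega

theorem rank_concat (w : List α) (z : α) :
    rank N (w ++ [z]) = rank N w + (w.length + 1).factorial * defect N (w ++ [z]) := by
  have take_eq : ∀ k ∈ Finset.range w.length, (w ++ [z]).take (k + 1) = w.take (k + 1) :=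
    fun k hk => List.take_append_of_le_length (Finset.mem_range.1 hk)
  simp only [rank, List.length_append, List.length_singleton, Finset.sum_range_succ]
  congr 1
  · exact Finset.sum_congr rfl fun k hk => by rw [take_eq k hk]
  · rw [List.take_of_length_le (by simp)]

theorem rank_concat_concat_lt {p : List α} {x y x' y' : α}
    (h : defect N (p ++ [x', y']) < defect N (p ++ [x, y])) :
    rank N (p ++ [x', y']) < rank N (p ++ [x, y]) := by
  have rank_pair (a b : α) : rank N (p ++ [a, b]) =
      rank N p + (p.length + 1).factorial * defect N (p ++ [a]) +
        (p.length + 2).factorial * defect N (p ++ [a, b]) := by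
    simpa [rank_concat] using rank_concat N (p ++ [a]) b
  have bound : defect N (p ++ [x']) < p.length + 2 := by
    simpa [Nat.lt_succ_iff] using defect_le_length N (p ++ [x'])
  have gain : (p.length + 1).factorial * defect N (p ++ [x']) < (p.length + 2).factorial := by
    rw [Nat.factorial_succ (p.length + 1), mul_comm]
    exact Nat.mul_lt_mul_of_pos_right bound (Nat.factorial_pos _)
  have loss : (p.length + 2).factorial * defect N (p ++ [x', y']) + (p.length + 2).factorial ≤
      (p.length + 2).factorial * defect N (p ++ [x, y]) := by
    rw [← Nat.mul_succ]
    exact Nat.mul_le_mul_left _ h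
  rw [rank_pair, rank_pair]
  omega

end Rank

namespace IsNormalisation

variable {N : List α → List α}

theorem apply_nil (h : IsNormalisation N) : N [] = [] :=
  List.length_eq_zero_iff.1 (h.length_eq [])

theorem absorb (h : IsNormalisation N) (u w v : List α) : N (u ++ N w ++ v) = N (u ++ w ++ v) := by
  rcases eq_or_ne w [] with rfl | hw
  · rw [h.apply_nil]
  · exact h.absorb_of_ne_nil u w v hw

theorem idem (h : IsNormalisation N) (w : List α) : N (N w) = N w := by
  simpa using h.absorb [] w []

theorem absorb_left (h : IsNormalisation N) (w v : List α) : N (N w ++ v) = N (w ++ v) := by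
  simpa using h.absorb [] w v

theorem absorb_cons (h : IsNormalisation N) (x : α) (w : List α) : N (x :: N w) = N (x :: w) := by
  simpa using h.absorb [x] w []

theorem absorb_pair (h : IsNormalisation N) {x y x' y' : α} (hxy : N [x, y] = [x', y'])
    (u v : List α) : N (u ++ [x', y'] ++ v) = N (u ++ [x, y] ++ v) := by
  rw [← hxy, h.absorb]

theorem apply_append_congr (h : IsNormalisation N) {s t : List α} (hst : N s = N t)
    (p : List α) : N (p ++ s) = N (p ++ t) := by
  have absorb_suffix (w : List α) : N (p ++ N w) = N (p ++ w) := by simpa using h.absorb p w []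
  rw [← absorb_suffix s, hst, absorb_suffix]

theorem exists_apply_pair (h : IsNormalisation N) (x y : α) : ∃ x' y', N [x, y] = [x', y'] :=
  List.length_eq_two.1 (h.length_eq [x, y])

theorem exists_apply_cons_eq_concat (h : IsNormalisation N) (x : α) (s : List α) :
    ∃ q z, N (x :: s) = q ++ [z] := by
  have ne_nil : N (x :: s) ≠ [] := List.ne_nil_of_length_pos (by simp [h.length_eq])
  simpa [ne_nil] using List.eq_nil_or_concat' (N (x :: s))

theorem apply_eq_of_rw (h : IsNormalisation N) {u v : List α} (huv : Rw N u v) : N u = N v := by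
  obtain ⟨p, s, x, y, rfl, -, rfl⟩ := huv
  exact (h.absorb p [x, y] s).symm

theorem apply_eq_of_reflTransGen (h : IsNormalisation N) {u v : List α}
    (huv : Relation.ReflTransGen (Rw N) u v) : N u = N v := by
  induction huv with
  | refl => rfl
  | tail _ step ih => rw [ih, h.apply_eq_of_rw step]

theorem keepsLast_nil (h : IsNormalisation N) (x : α) : KeepsLast N x [] := by
  simp [KeepsLast, h.apply_nil]

theorem keepsLast_letter_iff (h : IsNormalisation N) {x y : α} :
    KeepsLast N x [y] ↔ N [x, y] = [x, y] := by
  simp [KeepsLast, h.apply_letter, List.singleton_eq_append_iff]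

theorem keepsLast_congr (h : IsNormalisation N) {s t : List α} (hst : N s = N t) (x : α) :
    KeepsLast N x s ↔ KeepsLast N x t := by
  have cons_eq : N (x :: s) = N (x :: t) := h.apply_append_congr hst [x]
  rw [KeepsLast, KeepsLast, hst, cons_eq]

theorem defect_append_add_defect (h : IsNormalisation N) {s t : List α} (hst : N s = N t)
    (p : List α) : defect N (p ++ s) + defect N t = defect N (p ++ t) + defect N s := by
  induction p with
  | nil => exact add_comm _ _
  | cons x p ih =>
    have keeps_iff := h.keepsLast_congr (h.apply_append_congr hst p) x
    simp only [List.cons_append, defect]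
    split_ifs <;> first | omega | tauto

end IsNormalisation

namespace IsLocalNormalisation

variable {N : List α → List α}

theorem normal_iff_isChain (h : IsLocalNormalisation N) (w : List α) :
    N w = w ↔ w.IsChain (fun x y => N [x, y] = [x, y]) := by
  rcases eq_or_ne w [] with rfl | hw
  · simp [h.apply_nil]
  · rw [h.normal_iff_of_ne_nil w hw, List.isChain_iff_forall_rel_of_append_cons_cons]
    simp only [List.append_assoc, List.cons_append, List.nil_append]
    exact ⟨fun H x y p s => H p s x y, fun H p s x y => @H x y p s⟩

theorem normal_of_append_left (h : IsLocalNormalisation N) {p s : List α}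
    (hps : N (p ++ s) = p ++ s) : N p = p := by
  rw [h.normal_iff_isChain] at hps ⊢
  exact hps.left_of_append

theorem normal_of_append_right (h : IsLocalNormalisation N) {p s : List α}
    (hps : N (p ++ s) = p ++ s) : N s = s := by
  rw [h.normal_iff_isChain] at hps ⊢
  exact hps.right_of_append

theorem normal_append_pair (h : IsLocalNormalisation N) {p : List α} {a b : α}
    (hpa : N (p ++ [a]) = p ++ [a]) (hab : N [a, b] = [a, b]) :
    N (p ++ [a, b]) = p ++ [a, b] := by
  rw [h.normal_iff_isChain] at hpa ⊢
  exact List.isChain_split.2 ⟨hpa, List.isChain_pair.2 hab⟩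

theorem exists_rw_of_not_normal (h : IsLocalNormalisation N) {w : List α} (hw : N w ≠ w) :
    ∃ v, Rw N w v := by
  have ne_nil : w ≠ [] := by
    rintro rfl
    exact hw h.apply_nil
  rw [Ne, h.normal_iff_of_ne_nil w ne_nil] at hw
  push Not at hw
  obtain ⟨p, s, x, y, rfl, hxy⟩ := hw
  exact ⟨_, p, s, x, y, rfl, hxy, rfl⟩

theorem reflTransGen_apply (h : IsLocalNormalisation N)
    (wf : WellFounded (fun v u : List α => Rw N u v)) (w : List α) :
    Relation.ReflTransGen (Rw N) w (N w) := by
  induction w using wf.induction with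
  | _ w ih =>
    by_cases hw : N w = w
    · rw [hw]
    · obtain ⟨v, step⟩ := h.exists_rw_of_not_normal hw
      rw [h.apply_eq_of_rw step]
      exact (ih v step).head step

theorem confluent_of_wellFounded (h : IsLocalNormalisation N)
    (wf : WellFounded (fun v u : List α => Rw N u v)) {u v w : List α}
    (huv : Relation.ReflTransGen (Rw N) u v) (huw : Relation.ReflTransGen (Rw N) u w) :
    ∃ z, Relation.ReflTransGen (Rw N) v z ∧ Relation.ReflTransGen (Rw N) w z := by
  refine ⟨N u, ?_, ?_⟩
  · exact h.apply_eq_of_reflTransGen huv ▸ h.reflTransGen_apply wf v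
  · exact h.apply_eq_of_reflTransGen huw ▸ h.reflTransGen_apply wf w

end IsLocalNormalisation

namespace IsLeftClassThree

variable {N : List α → List α}

theorem domino (h : IsLeftClassThree N) {a c z y z' a' y' : α} (hac : N [a, c] = [a, c])
    (hcz : N [c, z] = [y, z']) (hay : N [a, y] = [a', y']) : N [y', z'] = [y', z'] := by
  have apply_acz : N [a, c, z] = [a', y', z'] := by
    simp [h.apply_triple, seqApplyL, applyAtL, hac, hcz, hay]
  have normal : N ([a'] ++ [y', z']) = [a'] ++ [y', z'] := by
    simpa [apply_acz] using h.idem [a, c, z]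
  exact h.normal_of_append_right normal

-- The dominoes tile a single sweep from right to left: `z` is pushed through `v` letter by letter,
-- and each letter that the sweep leaves behind is final.
theorem apply_append_pair (h : IsLeftClassThree N) {v : List α} {c z y z' : α}
    (hvc : N (v ++ [c]) = v ++ [c]) (hcz : N [c, z] = [y, z']) :
    N (v ++ [c, z]) = N (v ++ [y]) ++ [z'] := by
  induction v using List.reverseRecOn generalizing c z y z' with
  | nil => simp [hcz, h.apply_letter]
  | append_singleton v a ih =>
    obtain ⟨a', y', hay⟩ := h.exists_apply_pair a y
    have hac : N [a, c] = [a, c] := h.normal_of_append_right (p := v) (by simpa using hvc)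
    have sweep : N (v ++ [a, y]) = N (v ++ [a']) ++ [y'] := ih (h.normal_of_append_left hvc) hay
    have normal : N (N (v ++ [a']) ++ [y', z']) = N (v ++ [a']) ++ [y', z'] :=
      h.normal_append_pair (by rw [← sweep, h.idem]) (h.domino hac hcz hay)
    calc N (v ++ [a] ++ [c, z]) = N (v ++ [a, y] ++ [z']) := by
          simpa using (h.absorb_pair hcz (v ++ [a]) []).symm
      _ = N (N (v ++ [a']) ++ [y', z']) := by rw [← h.absorb_left, sweep]; simp
      _ = N (v ++ [a] ++ [y]) ++ [z'] := by simp [normal, sweep]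

theorem apply_concat (h : IsLeftClassThree N) {u v : List α} {c z y z' : α}
    (hu : N u = v ++ [c]) (hcz : N [c, z] = [y, z']) : N (u ++ [z]) = N (v ++ [y]) ++ [z'] := by
  have normal : N (v ++ [c]) = v ++ [c] := by rw [← hu, h.idem]
  rw [← h.apply_append_pair normal hcz, ← h.absorb_left, hu]
  simp

theorem keepsLast_of_normal_pair (h : IsLeftClassThree N) {x y : α} (hxy : N [x, y] = [x, y])
    (v : List α) : KeepsLast N x (y :: v) := by
  induction v using List.reverseRecOn with
  | nil => exact h.keepsLast_letter_iff.2 hxy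
  | append_singleton v a ih =>
    intro q z hq
    obtain ⟨r, c, hr⟩ := h.exists_apply_cons_eq_concat y v
    obtain ⟨b, z', hca⟩ := h.exists_apply_pair c a
    have apply_tail : N (y :: (v ++ [a])) = N (r ++ [b]) ++ [z'] := h.apply_concat hr hca
    have apply_word : N (x :: y :: (v ++ [a])) = N (x :: (r ++ [b])) ++ [z'] := by
      simpa [h.absorb_left] using h.apply_concat (ih r c hr) hca
    obtain ⟨rfl, last_eq⟩ := List.append_inj' (hq.symm.trans apply_tail) rfl
    rw [apply_word, h.absorb_cons, last_eq]

theorem keepsLast_of_keepsLast (h : IsLeftClassThree N) {x y x' y' : α} {t : List α}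
    (hxy : N [x, y] = [x', y']) (hx : KeepsLast N x (y :: t)) (hy : KeepsLast N y t) :
    KeepsLast N y' t := by
  intro q z hq
  have hxy' : N [x', y'] = [x', y'] := by rw [← hxy, h.idem]
  obtain ⟨r, g, hr⟩ := h.exists_apply_cons_eq_concat y' q
  have apply_word : N (x :: y :: t) = N (x' :: r) ++ [g, z] := by
    calc N (x :: y :: t) = N (x :: y :: q) ++ [z] := by rw [hx _ _ (hy q z hq), h.absorb_cons]
      _ = N (x' :: y' :: q) ++ [z] := by simpa using (h.absorb_pair hxy [] q).symm
      _ = N (x' :: r) ++ [g, z] := by simp [h.keepsLast_of_normal_pair hxy' q r g hr]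
  have normal_gz : N [g, z] = [g, z] :=
    h.normal_of_append_right (p := N (x' :: r)) (by rw [← apply_word, h.idem])
  have normal_rg : N (r ++ [g]) = r ++ [g] := by rw [← hr, h.idem]
  calc N (y' :: t) = N (N (y' :: q) ++ [z]) := by
        rw [h.absorb_left, ← h.absorb_cons, hq, List.cons_append]
    _ = N (y' :: q) ++ [z] := by simpa [hr] using h.normal_append_pair normal_rg normal_gz

theorem defect_apply_pair_append_le (h : IsLeftClassThree N) (x y : α) (t : List α) :
    defect N (N [x, y] ++ t) ≤ defect N ([x, y] ++ t) := by
  obtain ⟨x', y', hxy⟩ := h.exists_apply_pair x y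
  have keeps_x' : KeepsLast N x' (y' :: t) :=
    h.keepsLast_of_normal_pair (by rw [← hxy, h.idem]) t
  have keeps_y' : KeepsLast N x (y :: t) → KeepsLast N y t → KeepsLast N y' t :=
    h.keepsLast_of_keepsLast hxy
  simp only [hxy, List.cons_append, List.nil_append, defect, keeps_x', if_true]
  split_ifs <;> first | omega | tauto

theorem defect_apply_pair_lt (h : IsLeftClassThree N) {x y : α} (hxy : N [x, y] ≠ [x, y]) :
    defect N (N [x, y]) < defect N [x, y] := by
  obtain ⟨x', y', e⟩ := h.exists_apply_pair x y
  have keeps_x' : KeepsLast N x' [y'] := h.keepsLast_letter_iff.2 (by rw [← e, h.idem])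
  have not_keeps_x : ¬ KeepsLast N x [y] := mt h.keepsLast_letter_iff.1 hxy
  simp [e, defect, h.keepsLast_nil, keeps_x', not_keeps_x]

theorem rank_lt_of_rw (h : IsLeftClassThree N) {u v : List α} (huv : Rw N u v) :
    rank N v < rank N u := by
  obtain ⟨p, s, x, y, rfl, hxy, rfl⟩ := huv
  obtain ⟨x', y', e⟩ := h.exists_apply_pair x y
  induction s using List.reverseRecOn with
  | nil =>
    have same : N (N [x, y]) = N [x, y] := h.idem [x, y]
    have defect_lt : defect N (p ++ N [x, y]) < defect N (p ++ [x, y]) := by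
      have := h.defect_append_add_defect same p
      have := h.defect_apply_pair_lt hxy
      omega
    rw [e] at defect_lt ⊢
    simpa using rank_concat_concat_lt N defect_lt
  | append_singleton s z ih =>
    have same : N (N [x, y] ++ (s ++ [z])) = N ([x, y] ++ (s ++ [z])) := h.absorb_left _ _
    have defect_le : defect N (p ++ N [x, y] ++ s ++ [z]) ≤ defect N (p ++ [x, y] ++ s ++ [z]) := by
      have := h.defect_append_add_defect same p
      have := h.defect_apply_pair_append_le x y (s ++ [z])
      simp only [List.append_assoc]
      omega
    have length_eq : (p ++ N [x, y] ++ s).length = (p ++ [x, y] ++ s).length := by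
      simp only [List.length_append, h.length_eq]
    rw [← List.append_assoc, ← List.append_assoc, rank_concat, rank_concat, length_eq]
    exact add_lt_add_of_lt_of_le ih (Nat.mul_le_mul_left _ defect_le)

theorem wellFounded_rw (h : IsLeftClassThree N) : WellFounded (fun v u : List α => Rw N u v) :=
  Subrelation.wf h.rank_lt_of_rw (measure (rank N)).wf

end IsLeftClassThree

theorem rewriting_system_convergent_general {N : List α → List α} (h : IsLeftClassThree N) :
    WellFounded (fun v u : List α => Rw N u v) ∧
    (∀ u v w : List α, Relation.ReflTransGen (Rw N) u v →
      Relation.ReflTransGen (Rw N) u w →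
      ∃ z : List α, Relation.ReflTransGen (Rw N) v z ∧
        Relation.ReflTransGen (Rw N) w z) :=
  ⟨h.wellFounded_rw, fun _ _ _ => h.confluent_of_wellFounded h.wellFounded_rw⟩

/-- Theorem `thm-termination`: for a quadratic normalisation `(Γ,N)`
satisfying Condition (home), the associated rewriting system is convergent; in
particular it is terminating (the converse of the one-step rewriting relation is
well-founded), and it is confluent. -/
theorem rewriting_system_convergent
    {Γ : Type} [Fintype Γ] [Nonempty Γ]
    (N : List Γ → List Γ)
    (hlen : ∀ w : List Γ, (N w).length = w.length)
    (hone : ∀ x : Γ, N [x] = [x])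
    (habs : ∀ u w v : List Γ, w ≠ [] → N (u ++ N w ++ v) = N (u ++ w ++ v))
    (hquad₁ : ∀ w : List Γ, w ≠ [] →
      (N w = w ↔ ∀ p s : List Γ, ∀ x y : Γ, w = p ++ [x, y] ++ s → N [x, y] = [x, y]))
    (hquad₂ : ∀ w : List Γ, w ≠ [] →
      ∃ l : List ℕ, N w = seqApplyL (fun x y => N [x, y]) l w)
    (hhome : ∀ x y z : Γ,
      N [x, y, z] = seqApplyL (fun a b => N [a, b]) [1, 2, 1] [x, y, z] ∧
      N [x, y, z] = seqApplyL (fun a b => N [a, b]) [2, 1, 2, 1] [x, y, z]) :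
    WellFounded (fun v u : List Γ => Rw N u v) ∧
    (∀ u v w : List Γ, Relation.ReflTransGen (Rw N) u v →
      Relation.ReflTransGen (Rw N) u w →
      ∃ z : List Γ, Relation.ReflTransGen (Rw N) v z ∧
        Relation.ReflTransGen (Rw N) w z) :=
  rewriting_system_convergent_general
    ⟨⟨⟨hlen, hone, habs⟩, hquad₁⟩, fun x y z => (hhome x y z).1⟩

end Stmt7
end

section
/- Let Γ be a nonempty finite set and N a quadratic normalisation on Γ of breadth (3,4) or (4,3), i.e., for every length-three word w over Γ, N(w) = N̄_{212}(w) and N(w) = N̄_{1212}(w), or symmetrically N(w) = N̄_{121}(w) and N(w) = N̄_{2121}(w). Define the one-step rewriting relation → on words by: u → v iff u = p ++ [a, b] ++ s with N̄(ab) ≠ ab and v = p ++ N̄(ab) ++ s. Then every rewriting sequence starting from a word of length p has length at most 2^p − p − 1. -/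
namespace Stmt9

variable {α : Type}

/-- Apply the two-letter normalisation `nf` at (1-indexed) position `i` of a word. -/
def applyAtL (nf : α → α → List α) : ℕ → List α → List α
  | 1, x :: y :: s => nf x y ++ s
  | n + 2, x :: s => x :: applyAtL nf (n + 1) s
  | _, w => w

/-- Apply the two-letter normalisation along a finite sequence of positions
(the first position in the list is applied first). -/
def seqApplyL (nf : α → α → List α) (l : List ℕ) (w : List α) : List α :=
  l.foldl (fun w i => applyAtL nf i w) w

/-- The one-step rewriting relation associated with a quadratic normalisation:
replace some non-normal length-two factor `ab` by `N̄(ab)`. -/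
def Rw (N : List α → List α) (u v : List α) : Prop :=
  ∃ (p s : List α) (x y : α),
    u = p ++ [x, y] ++ s ∧ N [x, y] ≠ [x, y] ∧ v = p ++ N [x, y] ++ s

/-!
Write `N̄(xy) = (f x y)(g x y)` and suppose that `N` has breadth `(4, 3)`. Carrying a letter `x`
from left to right through a word `v` turns it into `v.foldl g x`. The identity
`N̄₁₂₁ = N̄₂₁₂₁` makes this letter invariant under rewriting of `v`, and the right domino rule keeps
normal pairs normal when both of their letters are carried.

Let `c(x, u)` be the largest number of letters that `x` can cross, each time by a rewriting step, in
a word reachable from `u`. Rewriting `u` does not increase `c(x, u)`. A step `xys → (f x y)(g x y)s`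
satisfies `c(f x y, (g x y)s) ≤ c(g x y, s) < c(x, ys)`: in the first inequality `f x y` stays
blocked behind the normal pair it forms with `g x y`, so it cannot overtake `g x y`. As two terms
`2 ^ a - 1` and `2 ^ b - 1` with `a ≤ b < c` sum to less than `2 ^ c - 1`, every step decreases
`∑ᵢ (2 ^ c(xᵢ, xᵢ₊₁⋯xₚ) - 1)`. Since `c(xᵢ, xᵢ₊₁⋯xₚ) ≤ p - i`, this sum is at most `2 ^ p - p - 1`.

Breadth `(3, 4)` reduces to breadth `(4, 3)` by reading words backwards.
-/

section Domino

open Relation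

variable {A : Type*} {f g : A → A → A}

/-- The pair `x, y` is fixed by the two-letter map `(x, y) ↦ (f x y, g x y)`. Such a map is given by
its two components `f` and `g` throughout. -/
def IsNormalPair (f g : A → A → A) (x y : A) : Prop :=
  f x y = x ∧ g x y = y

/-- The properties of the two-letter map `(x, y) ↦ (f x y, g x y)` of a quadratic normalisation of
breadth `(4, 3)` that bound its rewriting sequences: it is idempotent, it satisfies the right domino
rule, and carrying a letter through a pair gives the same letter before and after normalising the
pair. -/
structure IsDominoSystem (f g : A → A → A) : Prop where
  idem : ∀ x y, IsNormalPair f g (f x y) (g x y)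
  domino : ∀ x y z, IsNormalPair f g x y → IsNormalPair f g (g x (f y z)) (g y z)
  carry_eq : ∀ a x y, g (g a x) y = g (g a (f x y)) (g x y)

/-- One rewriting step: replace a non-normal factor `x, y` by `f x y, g x y`. -/
inductive Step (f g : A → A → A) : List A → List A → Prop
  | head {x y : A} (s : List A) (h : ¬ IsNormalPair f g x y) :
      Step f g (x :: y :: s) (f x y :: g x y :: s)
  | cons (z : A) {u v : List A} (h : Step f g u v) : Step f g (z :: u) (z :: v)

namespace Step

theorem length_eq {u v : List A} (h : Step f g u v) : v.length = u.length := by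
  induction h with
  | head => rfl
  | cons _ _ ih => exact congrArg Nat.succ ih

theorem append_left (p : List A) {u v : List A} (h : Step f g u v) :
    Step f g (p ++ u) (p ++ v) := by
  induction p with
  | nil => exact h
  | cons z p ih => exact .cons z ih

theorem append_right {u v : List A} (h : Step f g u v) (s : List A) :
    Step f g (u ++ s) (v ++ s) := by
  induction h with
  | head t h => exact .head (t ++ s) h
  | cons z _ ih => exact .cons z ih

theorem length_eq_of_reflTransGen {u v : List A} (h : ReflTransGen (Step f g) u v) :
    v.length = u.length := by
  induction h with
  | refl => rfl
  | tail _ h ih => exact h.length_eq.trans ih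

theorem cons_cases {x : A} {u v : List A} (h : Step f g (x :: u) v) :
    (∃ y s, u = y :: s ∧ ¬ IsNormalPair f g x y ∧ v = f x y :: g x y :: s) ∨
    ∃ u', Step f g u u' ∧ v = x :: u' := by
  cases h with
  | head s h => exact .inl ⟨_, s, rfl, h, rfl⟩
  | cons _ h => exact .inr ⟨_, h, rfl⟩

theorem append_cons_cases {q r v : List A} {c : A} (h : Step f g (q ++ c :: r) v) :
    (∃ q', Step f g q q' ∧ v = q' ++ c :: r) ∨
    (∃ q₀ y, q = q₀ ++ [y] ∧ ¬ IsNormalPair f g y c) ∨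
    (∃ b s, r = b :: s ∧ ¬ IsNormalPair f g c b ∧ v = q ++ f c b :: g c b :: s) ∨
    ∃ r', Step f g r r' ∧ v = q ++ c :: r' := by
  induction q generalizing v with
  | nil => exact .inr (.inr h.cons_cases)
  | cons x q ih =>
    rcases h.cons_cases with ⟨y, s, hys, hxy, rfl⟩ | ⟨u, hu, rfl⟩
    · cases q with
      | nil =>
        obtain ⟨rfl, -⟩ := List.cons.inj hys
        exact .inr (.inl ⟨[], x, rfl, hxy⟩)
      | cons z q =>
        obtain ⟨rfl, rfl⟩ := List.cons.inj hys
        exact .inl ⟨_, .head q hxy, rfl⟩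
    · rcases ih hu with ⟨q', hq, rfl⟩ | ⟨q₀, y, rfl, hyc⟩ | ⟨b, s, rfl, hcb, rfl⟩ | ⟨r', hr, rfl⟩
      · exact .inl ⟨x :: q', .cons x hq, rfl⟩
      · exact .inr (.inl ⟨x :: q₀, y, rfl, hyc⟩)
      · exact .inr (.inr (.inl ⟨b, s, rfl, hcb, rfl⟩))
      · exact .inr (.inr (.inr ⟨r', hr, rfl⟩))

end Step

/-- The word left behind when `a` is carried through a word from left to right. The letter that
comes out at the end of a word `u` is `u.foldl g a`. -/
def residue (f g : A → A → A) : A → List A → List A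
  | _, [] => []
  | a, b :: r => f a b :: residue f g (g a b) r

/-- Every elementary move of `a` through the word from left to right is a rewriting step. -/
def Crosses (f g : A → A → A) : A → List A → Prop
  | _, [] => True
  | a, b :: r => ¬ IsNormalPair f g a b ∧ Crosses f g (g a b) r

/-- Each letter of the word, carried to its end, forms a normal pair with `c`. This property of
`residue f g a r` and `c = r.foldl g a` survives rewriting of the word, while normality of its last
letter with `c` alone would not. -/
def SuffixesNormal (f g : A → A → A) (c : A) : List A → Prop
  | [] => True
  | y :: t => IsNormalPair f g (t.foldl g y) c ∧ SuffixesNormal f g c t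

theorem residue_append (a : A) (u v : List A) :
    residue f g a (u ++ v) = residue f g a u ++ residue f g (u.foldl g a) v := by
  induction u generalizing a with
  | nil => rfl
  | cons b u ih => exact congrArg (f a b :: ·) (ih _)

theorem crosses_append {a : A} {u v : List A} :
    Crosses f g a (u ++ v) ↔ Crosses f g a u ∧ Crosses f g (u.foldl g a) v := by
  induction u generalizing a with
  | nil => simp [Crosses]
  | cons b u ih => simp [Crosses, ih, and_assoc]

theorem SuffixesNormal.isNormalPair_last {c y : A} {q : List A}
    (h : SuffixesNormal f g c (q ++ [y])) : IsNormalPair f g y c := by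
  induction q with
  | nil => exact h.1
  | cons b q ih => exact ih h.2

namespace IsDominoSystem

theorem foldl_eq_of_step (H : IsDominoSystem f g) (a : A) {u v : List A} (h : Step f g u v) :
    u.foldl g a = v.foldl g a := by
  induction h generalizing a with
  | @head x y s _ => exact congrArg (s.foldl g) (H.carry_eq a x y)
  | cons _ _ ih => exact ih _

theorem foldl_eq_of_reflTransGen (H : IsDominoSystem f g) (a : A) {u v : List A}
    (h : ReflTransGen (Step f g) u v) : u.foldl g a = v.foldl g a := by
  induction h with
  | refl => rfl
  | tail _ h ih => exact ih.trans (H.foldl_eq_of_step a h)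

theorem isNormalPair_foldl (H : IsDominoSystem f g) {x a : A} (h : IsNormalPair f g x a)
    (r : List A) : IsNormalPair f g ((residue f g a r).foldl g x) (r.foldl g a) := by
  induction r generalizing x a with
  | nil => exact h
  | cons b _ ih => exact ih (H.domino x a b h)

theorem suffixesNormal_residue (H : IsDominoSystem f g) (a : A) (r : List A) :
    SuffixesNormal f g (r.foldl g a) (residue f g a r) := by
  induction r generalizing a with
  | nil => trivial
  | cons b r ih => exact ⟨H.isNormalPair_foldl (H.idem a b) r, ih _⟩

theorem suffixesNormal_of_step (H : IsDominoSystem f g) {c : A} {u v : List A}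
    (h : Step f g u v) (hu : SuffixesNormal f g c u) : SuffixesNormal f g c v := by
  induction h with
  | @head x y s _ =>
    have hfirst : IsNormalPair f g (s.foldl g (g (f x y) (g x y))) c :=
      (H.idem x y).2.symm ▸ hu.1
    exact ⟨hfirst, hu.1, hu.2.2⟩
  | cons z h ih => exact ⟨H.foldl_eq_of_step z h ▸ hu.1, ih hu.2⟩

theorem suffixesNormal_of_reflTransGen (H : IsDominoSystem f g) {c : A} {u v : List A}
    (h : ReflTransGen (Step f g) u v) (hu : SuffixesNormal f g c u) : SuffixesNormal f g c v := by
  induction h with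
  | refl => exact hu
  | tail _ h ih => exact H.suffixesNormal_of_step h ih

/-- In a word reachable from `a :: r`, the letter `a` has crossed some `r₁`, and all other rewriting
took place on one side of it. -/
theorem exists_of_reflTransGen_cons (H : IsDominoSystem f g) {a : A} {r v : List A}
    (h : ReflTransGen (Step f g) (a :: r) v) :
    ∃ q r₁ r₂, v = q ++ r₁.foldl g a :: r₂ ∧ ReflTransGen (Step f g) r (r₁ ++ r₂) ∧
      q.length = r₁.length ∧ Crosses f g a r₁ ∧ ReflTransGen (Step f g) (residue f g a r₁) q := by
  induction h with
  | refl => exact ⟨[], [], r, rfl, .refl, rfl, trivial, .refl⟩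
  | tail _ h ih =>
    obtain ⟨q, r₁, r₂, rfl, hr, hlen, hcross, hq⟩ := ih
    rcases h.append_cons_cases with
      ⟨q', hq', rfl⟩ | ⟨q₀, y, rfl, hy⟩ | ⟨b, s, rfl, hb, rfl⟩ | ⟨r', hr', rfl⟩
    · exact ⟨q', r₁, r₂, rfl, hr, hq'.length_eq.trans hlen, hcross, hq.tail hq'⟩
    · have hnormal := H.suffixesNormal_of_reflTransGen hq (H.suffixesNormal_residue a r₁)
      exact absurd hnormal.isNormalPair_last hy
    · have hq' : ReflTransGen (Step f g) (residue f g a (r₁ ++ [b]))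
          (q ++ [f (r₁.foldl g a) b]) := by
        rw [residue_append]
        exact hq.lift (· ++ [f (r₁.foldl g a) b]) fun _ _ h => h.append_right _
      exact ⟨q ++ [f (r₁.foldl g a) b], r₁ ++ [b], s, by simp, by simpa using hr, by simp [hlen],
        crosses_append.2 ⟨hcross, hb, trivial⟩, hq'⟩
    · exact ⟨q, r₁, r', rfl, hr.tail (hr'.append_left r₁), hlen, hcross, hq⟩

end IsDominoSystem

/-- The letter `x` can cross `m` letters in some word reachable from `u`. -/
def CanCross (f g : A → A → A) (x : A) (u : List A) (m : ℕ) : Prop :=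
  ∃ v₁ v₂, ReflTransGen (Step f g) u (v₁ ++ v₂) ∧ Crosses f g x v₁ ∧ v₁.length = m

/-- The largest number of letters that `x` can cross in a word reachable from `u`. -/
noncomputable def crossing (f g : A → A → A) (x : A) (u : List A) : ℕ :=
  sSup {m | CanCross f g x u m}

theorem CanCross.le_length {x : A} {u : List A} {m : ℕ} (h : CanCross f g x u m) :
    m ≤ u.length := by
  obtain ⟨v₁, v₂, hv, -, rfl⟩ := h
  rw [← Step.length_eq_of_reflTransGen hv, List.length_append]
  exact Nat.le_add_right _ _

theorem CanCross.le_crossing {x : A} {u : List A} {m : ℕ} (h : CanCross f g x u m) :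
    m ≤ crossing f g x u :=
  le_csSup ⟨u.length, fun _ => CanCross.le_length⟩ h

theorem canCross_crossing (f g : A → A → A) (x : A) (u : List A) :
    CanCross f g x u (crossing f g x u) :=
  Nat.sSup_mem (s := {m | CanCross f g x u m}) ⟨0, [], u, .refl, trivial, rfl⟩
    ⟨u.length, fun _ => CanCross.le_length⟩

theorem crossing_le_length (f g : A → A → A) (x : A) (u : List A) :
    crossing f g x u ≤ u.length :=
  (canCross_crossing f g x u).le_length

theorem Step.crossing_le {u v : List A} (h : Step f g u v) (x : A) :
    crossing f g x v ≤ crossing f g x u := by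
  obtain ⟨v₁, v₂, hv, hcross, hlen⟩ := canCross_crossing f g x v
  exact CanCross.le_crossing ⟨v₁, v₂, hv.head h, hcross, hlen⟩

theorem crossing_lt_crossing_cons {x a : A} (h : ¬ IsNormalPair f g x a) (r : List A) :
    crossing f g (g x a) r < crossing f g x (a :: r) := by
  obtain ⟨v₁, v₂, hv, hcross, hlen⟩ := canCross_crossing f g (g x a) r
  exact CanCross.le_crossing
    ⟨a :: v₁, v₂, hv.lift (a :: ·) fun _ _ => .cons a, ⟨h, hcross⟩, congrArg Nat.succ hlen⟩

/-- The sum of `2 ^ c - 1` over the letters of the word, where `c` is the largest number of letters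
that the letter can cross in words reachable from the suffix after it. It decreases along rewriting
steps. -/
noncomputable def potential (f g : A → A → A) : List A → ℕ
  | [] => 0
  | x :: u => potential f g u + (2 ^ crossing f g x u - 1)

theorem potential_add_length_lt (f g : A → A → A) (w : List A) :
    potential f g w + w.length < 2 ^ w.length := by
  induction w with
  | nil => exact one_pos
  | cons x u ih =>
    have hpow : 2 ^ crossing f g x u ≤ 2 ^ u.length :=
      Nat.pow_le_pow_right two_pos (crossing_le_length f g x u)
    have hpos : 0 < 2 ^ crossing f g x u := Nat.two_pow_pos _
    simp only [potential, List.length_cons, pow_succ]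
    omega

namespace IsDominoSystem

theorem crossing_cons_le (H : IsDominoSystem f g) {x a : A} (h : IsNormalPair f g x a)
    (r : List A) : crossing f g x (a :: r) ≤ crossing f g a r := by
  obtain ⟨v₁, v₂, hv, hcross, hlen⟩ := canCross_crossing f g x (a :: r)
  obtain ⟨q, r₁, r₂, hsplit, hr, hq_len, hcross', hq⟩ := H.exists_of_reflTransGen_cons hv
  have hr₁ : r₁.length ≤ crossing f g a r := CanCross.le_crossing ⟨r₁, r₂, hr, hcross', rfl⟩
  suffices v₁.length ≤ q.length by omega
  -- Otherwise `x` crosses the letter carried from `a`, with which it forms a normal pair.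
  by_contra! hlt
  obtain ⟨s, rfl⟩ : q ++ [r₁.foldl g a] <+: v₁ :=
    List.prefix_of_prefix_length_le ⟨r₂, by simp [hsplit]⟩ (List.prefix_append v₁ v₂)
      (by simpa using hlt)
  have hblocked : IsNormalPair f g (q.foldl g x) (r₁.foldl g a) :=
    H.foldl_eq_of_reflTransGen x hq ▸ H.isNormalPair_foldl h r₁
  exact (crosses_append.1 (crosses_append.1 hcross).1).2.1 hblocked

theorem potential_lt (H : IsDominoSystem f g) {u v : List A} (h : Step f g u v) :
    potential f g v < potential f g u := by
  induction h with
  | @head x y s h =>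
    have hright : 2 * 2 ^ crossing f g (g x y) s ≤ 2 ^ crossing f g x (y :: s) := by
      rw [← pow_succ']
      exact Nat.pow_le_pow_right two_pos (crossing_lt_crossing_cons h s)
    have hleft : 2 ^ crossing f g (f x y) (g x y :: s) ≤ 2 ^ crossing f g (g x y) s :=
      Nat.pow_le_pow_right two_pos (H.crossing_cons_le (H.idem x y) s)
    have hpos : 0 < 2 ^ crossing f g (f x y) (g x y :: s) := Nat.two_pow_pos _
    simp only [potential]
    omega
  | cons z h ih =>
    exact add_lt_add_of_lt_of_le ih
      (Nat.sub_le_sub_right (Nat.pow_le_pow_right two_pos (h.crossing_le z)) 1)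

theorem add_potential_le (H : IsDominoSystem f g) {n : ℕ} {w : ℕ → List A}
    (hw : ∀ i < n, Step f g (w i) (w (i + 1))) :
    n + potential f g (w n) ≤ potential f g (w 0) := by
  induction n with
  | zero => rw [Nat.zero_add]
  | succ n ih =>
    have hprev := ih fun i hi => hw i (hi.trans n.lt_succ_self)
    have hlast := H.potential_lt (hw n n.lt_succ_self)
    omega

theorem le_two_pow_sub (H : IsDominoSystem f g) {n : ℕ} {w : ℕ → List A}
    (hw : ∀ i < n, Step f g (w i) (w (i + 1))) :
    n ≤ 2 ^ (w 0).length - (w 0).length - 1 := by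
  have hdecrease := H.add_potential_le hw
  have hstart := potential_add_length_lt f g (w 0)
  omega

end IsDominoSystem

end Domino

section Normalisation

variable {N : List α → List α} {f g : α → α → α}

theorem idempotent_of_absorbs (hlen : ∀ w, (N w).length = w.length)
    (habs : ∀ u w v, w ≠ [] → N (u ++ N w ++ v) = N (u ++ w ++ v)) (w : List α) :
    N (N w) = N w := by
  rcases eq_or_ne w [] with rfl | hw
  · have hnil : N [] = [] := List.eq_nil_of_length_eq_zero (hlen [])
    rw [hnil, hnil]
  · simpa only [List.nil_append, List.append_nil] using habs [] w [] hw

theorem exists_pair_components (hlen : ∀ w, (N w).length = w.length) :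
    ∃ f g : α → α → α, ∀ x y, N [x, y] = [f x y, g x y] := by
  choose f g hN using fun x y => List.length_eq_two.1 (hlen [x, y])
  exact ⟨f, g, hN⟩

theorem isNormalPair_iff (hN : ∀ x y, N [x, y] = [f x y, g x y]) {x y : α} :
    IsNormalPair f g x y ↔ N [x, y] = [x, y] := by
  simp [IsNormalPair, hN]

theorem Rw.step (hN : ∀ x y, N [x, y] = [f x y, g x y]) {u v : List α} (h : Rw N u v) :
    Step f g u v := by
  obtain ⟨p, s, x, y, rfl, hne, rfl⟩ := h
  simpa [hN] using (Step.head s (mt (isNormalPair_iff hN).1 hne)).append_left p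

theorem isDominoSystem_of_breadth_43 (hN : ∀ x y, N [x, y] = [f x y, g x y])
    (hidem : ∀ w, N (N w) = N w)
    (hfactor : ∀ p s x y, N (p ++ [x, y] ++ s) = p ++ [x, y] ++ s → N [x, y] = [x, y])
    (hbreadth : ∀ x y z : α,
      N [x, y, z] = seqApplyL (fun a b => N [a, b]) [1, 2, 1] [x, y, z] ∧
      N [x, y, z] = seqApplyL (fun a b => N [a, b]) [2, 1, 2, 1] [x, y, z]) :
    IsDominoSystem f g where
  idem x y := (isNormalPair_iff hN).2 (hN x y ▸ hidem [x, y])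
  domino x y z hxy := by
    have htriple : N [x, y, z] = [f x (f y z), g x (f y z), g y z] := by
      simpa [seqApplyL, applyAtL, hN, hxy.1, hxy.2] using (hbreadth x y z).1
    have hfixed : N [f x (f y z), g x (f y z), g y z] = [f x (f y z), g x (f y z), g y z] :=
      htriple ▸ hidem [x, y, z]
    exact (isNormalPair_iff hN).2 (hfactor [f x (f y z)] [] _ _ hfixed)
  carry_eq a x y := by
    have h := (hbreadth a x y).1.symm.trans (hbreadth a x y).2
    simp only [seqApplyL, List.foldl, applyAtL, hN, List.cons_append, List.nil_append,
      List.cons.injEq] at h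
    exact h.2.2.1

theorem le_two_pow_sub_of_breadth_43 (hlen : ∀ w, (N w).length = w.length)
    (hidem : ∀ w, N (N w) = N w)
    (hfactor : ∀ p s x y, N (p ++ [x, y] ++ s) = p ++ [x, y] ++ s → N [x, y] = [x, y])
    (hbreadth : ∀ x y z : α,
      N [x, y, z] = seqApplyL (fun a b => N [a, b]) [1, 2, 1] [x, y, z] ∧
      N [x, y, z] = seqApplyL (fun a b => N [a, b]) [2, 1, 2, 1] [x, y, z])
    {n : ℕ} {w : ℕ → List α} (hw : ∀ i < n, Rw N (w i) (w (i + 1))) :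
    n ≤ 2 ^ (w 0).length - (w 0).length - 1 := by
  obtain ⟨f, g, hN⟩ := exists_pair_components hlen
  exact (isDominoSystem_of_breadth_43 hN hidem hfactor hbreadth).le_two_pow_sub
    fun i hi => (hw i hi).step hN

/-- The normalisation `N` read from right to left, which exchanges the breadths `(3, 4)` and
`(4, 3)`. -/
def mirror (N : List α → List α) (w : List α) : List α :=
  (N w.reverse).reverse

theorem length_mirror (hlen : ∀ w, (N w).length = w.length) (w : List α) :
    (mirror N w).length = w.length := by
  simp only [mirror, List.length_reverse, hlen]

theorem mirror_mirror_apply (hidem : ∀ w, N (N w) = N w) (w : List α) :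
    mirror N (mirror N w) = mirror N w := by
  simp only [mirror, List.reverse_reverse, hidem]

theorem mirror_pair_of_mirror_append
    (hfactor : ∀ p s x y, N (p ++ [x, y] ++ s) = p ++ [x, y] ++ s → N [x, y] = [x, y])
    (p s : List α) (x y : α) (h : mirror N (p ++ [x, y] ++ s) = p ++ [x, y] ++ s) :
    mirror N [x, y] = [x, y] := by
  have hyx : N [y, x] = [y, x] := hfactor s.reverse p.reverse y x <| by
    simpa [mirror] using congrArg List.reverse h
  simp [mirror, hyx]

theorem mirror_breadth_43 (hlen : ∀ w, (N w).length = w.length)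
    (hbreadth : ∀ x y z : α,
      N [x, y, z] = seqApplyL (fun a b => N [a, b]) [2, 1, 2] [x, y, z] ∧
      N [x, y, z] = seqApplyL (fun a b => N [a, b]) [1, 2, 1, 2] [x, y, z]) (x y z : α) :
    mirror N [x, y, z] = seqApplyL (fun a b => mirror N [a, b]) [1, 2, 1] [x, y, z] ∧
    mirror N [x, y, z] = seqApplyL (fun a b => mirror N [a, b]) [2, 1, 2, 1] [x, y, z] := by
  obtain ⟨f, g, hN⟩ := exists_pair_components hlen
  have hmirror (u : List α) (h : N [z, y, x] = u) : mirror N [x, y, z] = u.reverse :=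
    congrArg List.reverse h
  constructor
  · rw [hmirror _ (hbreadth z y x).1]
    simp [mirror, seqApplyL, applyAtL, hN]
  · rw [hmirror _ (hbreadth z y x).2]
    simp [mirror, seqApplyL, applyAtL, hN]

theorem Rw.mirror {u v : List α} (h : Rw N u v) : Rw (mirror N) u.reverse v.reverse := by
  obtain ⟨p, s, x, y, rfl, hne, rfl⟩ := h
  refine ⟨s.reverse, p.reverse, y, x, by simp, fun hyx => hne ?_, by simp [Stmt9.mirror]⟩
  simpa [Stmt9.mirror] using congrArg List.reverse hyx

end Normalisation

theorem rewriting_length_bound_breadth_34_general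
    {Γ : Type} (N : List Γ → List Γ)
    (hlen : ∀ w : List Γ, (N w).length = w.length)
    (hidem : ∀ w : List Γ, N (N w) = N w)
    (hfactor : ∀ (p s : List Γ) (x y : Γ),
      N (p ++ [x, y] ++ s) = p ++ [x, y] ++ s → N [x, y] = [x, y])
    (hbreadth :
      (∀ x y z : Γ,
        N [x, y, z] = seqApplyL (fun a b => N [a, b]) [2, 1, 2] [x, y, z] ∧
        N [x, y, z] = seqApplyL (fun a b => N [a, b]) [1, 2, 1, 2] [x, y, z]) ∨
      (∀ x y z : Γ,
        N [x, y, z] = seqApplyL (fun a b => N [a, b]) [1, 2, 1] [x, y, z] ∧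
        N [x, y, z] = seqApplyL (fun a b => N [a, b]) [2, 1, 2, 1] [x, y, z])) :
    ∀ (p n : ℕ) (f : ℕ → List Γ), (f 0).length = p →
      (∀ i < n, Rw N (f i) (f (i + 1))) → n ≤ 2 ^ p - p - 1 := by
  rintro _ n f rfl hf
  rcases hbreadth with h34 | h43
  · have hbound := le_two_pow_sub_of_breadth_43 (length_mirror hlen) (mirror_mirror_apply hidem)
      (mirror_pair_of_mirror_append hfactor) (mirror_breadth_43 hlen h34)
      (w := fun i => (f i).reverse) fun i hi => (hf i hi).mirror
    simpa only [List.length_reverse] using hbound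
  · exact le_two_pow_sub_of_breadth_43 hlen hidem hfactor h43 hf

/-- for a quadratic normalisation `(Γ,N)` of breadth `(3,4)` or
`(4,3)`, every rewriting sequence starting from a word of length `p` has length at most
`2^p − p − 1`. -/
theorem rewriting_length_bound_breadth_34
    {Γ : Type} [Fintype Γ] [Nonempty Γ]
    (N : List Γ → List Γ)
    (hlen : ∀ w : List Γ, (N w).length = w.length)
    (hone : ∀ x : Γ, N [x] = [x])
    (habs : ∀ u w v : List Γ, w ≠ [] → N (u ++ N w ++ v) = N (u ++ w ++ v))
    (hquad₁ : ∀ w : List Γ, w ≠ [] →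
      (N w = w ↔ ∀ p s : List Γ, ∀ x y : Γ, w = p ++ [x, y] ++ s → N [x, y] = [x, y]))
    (hquad₂ : ∀ w : List Γ, w ≠ [] →
      ∃ l : List ℕ, N w = seqApplyL (fun x y => N [x, y]) l w)
    (hbreadth :
      (∀ x y z : Γ,
        N [x, y, z] = seqApplyL (fun a b => N [a, b]) [2, 1, 2] [x, y, z] ∧
        N [x, y, z] = seqApplyL (fun a b => N [a, b]) [1, 2, 1, 2] [x, y, z]) ∨
      (∀ x y z : Γ,
        N [x, y, z] = seqApplyL (fun a b => N [a, b]) [1, 2, 1] [x, y, z] ∧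
        N [x, y, z] = seqApplyL (fun a b => N [a, b]) [2, 1, 2, 1] [x, y, z])) :
    ∀ (p n : ℕ) (f : ℕ → List Γ), (f 0).length = p →
      (∀ i < n, Rw N (f i) (f (i + 1))) → n ≤ 2 ^ p - p - 1 :=
  rewriting_length_bound_breadth_34_general N hlen (idempotent_of_absorbs hlen habs)
    (fun p s x y h => (hquad₁ _ (by simp)).1 h p s x y rfl) hbreadth

end Stmt9
end
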